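/- arXiv:2503.02406 — 5 statements merged into one kernel-verified Lean document; each statement's English description precedes it below -/
import Mathlib

section
/- Let n ≥ 0, s > 2, and let q₀, q₁ be points on the unit sphere S^{2n+1} ⊂ ℂ^{n+1} with |⟨q₀, q₁⟩| = sqrt(1 − 4/s²). Set β := 1 − s/sqrt(s² − 4). Then q₀ and q₁ are connected by a unit-speed magnetic geodesic of strength s (there exist ψ ∈ [0,π], a unit-speed magnetic geodesic γ of strength s with contact angle ψ, and t₀, t₁ ∈ ℝ with γ(t₀) = q₀, γ(t₁) = q₁) if and only if there exists m ∈ ℤ such that ⟨q₀, q₁⟩ = sqrt(1 − 4/s²)·e^{i·β·(π/2 + m·π)}. Moreover, in that case the contact angle is necessarily ψ = arccos(2/s). -/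
noncomputable section

open scoped Real

/-- Hermitian product on `ℂ^{n+1}`, ℂ-linear in the first argument and
conjugate-linear in the second (paper convention). -/
def herm {n : ℕ} (x y : EuclideanSpace ℂ (Fin (n + 1))) : ℂ := inner ℂ y x

/-- Norm of the point `C_s(ψ) = (−s/2 + cos ψ, sin ψ) ∈ ℝ²`, i.e.
`|C_s(ψ)| = sqrt(s²/4 + 1 − s cos ψ)`. -/
def normC (s ψ : ℝ) : ℝ := Real.sqrt (s ^ 2 / 4 + 1 - s * Real.cos ψ)

/-- Angle of `C_s(ψ)` with the positive x-axis: the unique `τ ∈ [0,π]` with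
`cos τ = (−s/2 + cos ψ)/|C_s(ψ)|`. -/
def argC (s ψ : ℝ) : ℝ := Real.arccos ((-s / 2 + Real.cos ψ) / normC s ψ)

/-- `γ` is a unit-speed magnetic geodesic of strength `s` with contact angle `ψ`,
in the paper's ambient-space formulation: `γ'' − i·s·γ' + (1 − s·cos ψ)·γ = 0`,
`|γ(0)| = 1`, `|γ'(0)| = 1`, `Re⟨γ(0),γ'(0)⟩ = 0`, `Re⟨i·γ(0),γ'(0)⟩ = cos ψ`. -/
def IsMagGeo {n : ℕ} (s ψ : ℝ) (γ : ℝ → EuclideanSpace ℂ (Fin (n + 1))) : Prop :=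
  ContDiff ℝ (⊤ : ℕ∞) γ ∧
  (∀ t : ℝ, deriv (deriv γ) t - ((s : ℂ) * Complex.I) • deriv γ t
      + ((1 : ℂ) - (s : ℂ) * (Real.cos ψ : ℂ)) • γ t = 0) ∧
  ‖γ 0‖ = 1 ∧ ‖deriv γ 0‖ = 1 ∧ (herm (γ 0) (deriv γ 0)).re = 0 ∧
  (herm (Complex.I • γ 0) (deriv γ 0)).re = Real.cos ψ

/-- The curve `γ(t) = e^{i s t/2}(e^{−i|C_s(ψ)|t} w₀ + e^{i|C_s(ψ)|t} w₁)`. -/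
def magCurve {n : ℕ} (s ψ : ℝ) (w₀ w₁ : EuclideanSpace ℂ (Fin (n + 1))) (t : ℝ) :
    EuclideanSpace ℂ (Fin (n + 1)) :=
  Complex.exp (Complex.I * s * t / 2) •
    (Complex.exp (-(Complex.I * normC s ψ * t)) • w₀ +
     Complex.exp (Complex.I * normC s ψ * t) • w₁)

/-- The Clifford torus `𝕋²_{w₀,w₁} = {λ₀ w₀ + λ₁ w₁ : |λ₀| = |λ₁| = 1}`. -/
def cliffordTorus {n : ℕ} (w₀ w₁ : EuclideanSpace ℂ (Fin (n + 1))) :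
    Set (EuclideanSpace ℂ (Fin (n + 1))) :=
  {x | ∃ l₀ l₁ : ℂ, ‖l₀‖ = 1 ∧ ‖l₁‖ = 1 ∧ x = l₀ • w₀ + l₁ • w₁}

/-!
In the frame rotating with speed `s / 2` the magnetic geodesic equation becomes that of a harmonic
oscillator of frequency `R = |C_s(ψ)|`, so the geodesics of contact angle `ψ` are the curves
`magCurve s ψ w₀ w₁`; the initial conditions say exactly that `w₀ ⊥ w₁`, `|w₀| = sin (τ / 2)` and
`|w₁| = cos (τ / 2)`, where `τ = argC s ψ`. Hence
`⟨γ(t₀), γ(t₁)⟩ = e^{i s t / 2} (cos (R t) + i cos τ sin (R t))` with `t = t₀ - t₁`, and conversely,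
if `sin (R t) ≠ 0`, two unit vectors with this Hermitian product are joined by a geodesic, because
`w₀` and `w₁` can be solved for. The squared modulus of this product exceeds `1 - 4 / s²` by a
multiple of `(2 R cos (R t))² + ((s cos ψ - 2) sin (R t))²`, so it attains that value only when
`cos ψ = 2 / s` and `R t ∈ π / 2 + π ℤ`; the phase can then be read off.
-/

section ExponentialCurves

variable {E : Type*} [NormedAddCommGroup E] [NormedSpace ℂ E]

lemma hasDerivAt_exp_mul_smul (a : ℂ) (w : E) (t : ℝ) :
    HasDerivAt (fun t : ℝ ↦ Complex.exp (a * t) • w) (Complex.exp (a * t) • a • w) t := by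
  have hexp : HasDerivAt (fun t : ℝ ↦ Complex.exp (a * t)) (Complex.exp (a * t) * a) t := by
    simpa using ((hasDerivAt_id (t : ℂ)).const_mul a).cexp.comp_ofReal
  simpa only [mul_smul] using hexp.smul_const w

lemma eq_exp_smul_of_hasDerivAt_smul {f : ℝ → E} {a : ℂ}
    (hf : ∀ t, HasDerivAt f (a • f t) t) (t : ℝ) : f t = Complex.exp (a * t) • f 0 := by
  have hconst : ∀ t : ℝ, HasDerivAt (fun t : ℝ ↦ Complex.exp (-a * t) • f t) 0 t := fun t ↦ by
    have hexp : HasDerivAt (fun t : ℝ ↦ Complex.exp (-a * t)) (Complex.exp (-a * t) * -a) t := by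
      simpa using hasDerivAt_exp_mul_smul (-a) (1 : ℂ) t
    exact (hexp.smul (hf t)).congr_deriv (by module)
  have h0 : Complex.exp (-a * t) • f t = f 0 := by
    simpa using is_const_of_deriv_eq_zero (fun t ↦ (hconst t).differentiableAt)
      (fun t ↦ (hconst t).deriv) t 0
  rw [← h0, smul_smul, ← Complex.exp_add, neg_mul, add_neg_cancel, Complex.exp_zero, one_smul]

-- Each factor of `(D - a)(D - b)` annihilates the image of `f` under the other factor.
lemma exists_eq_exp_smul_add_exp_smul {f f' : ℝ → E} {a b : ℂ} (hab : a ≠ b)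
    (hf : ∀ t, HasDerivAt f (f' t) t)
    (hf' : ∀ t, HasDerivAt f' ((a + b) • f' t - (a * b) • f t) t) :
    ∃ w₀ w₁ : E, ∀ t : ℝ, f t = Complex.exp (a * t) • w₀ + Complex.exp (b * t) • w₁ := by
  have ha : ∀ t : ℝ, f' t - b • f t = Complex.exp (a * t) • (f' 0 - b • f 0) :=
    eq_exp_smul_of_hasDerivAt_smul fun t ↦
      ((hf' t).sub ((hf t).const_smul b)).congr_deriv (by module)
  have hb : ∀ t : ℝ, f' t - a • f t = Complex.exp (b * t) • (f' 0 - a • f 0) :=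
    eq_exp_smul_of_hasDerivAt_smul fun t ↦
      ((hf' t).sub ((hf t).const_smul a)).congr_deriv (by module)
  refine ⟨(a - b)⁻¹ • (f' 0 - b • f 0), -(a - b)⁻¹ • (f' 0 - a • f 0), fun t ↦ ?_⟩
  calc f t = (a - b)⁻¹ • ((f' t - b • f t) - (f' t - a • f t)) := by
        rw [eq_inv_smul_iff₀ (sub_ne_zero.2 hab)]
        module
    _ = _ := by
        rw [ha t, hb t]
        module

end ExponentialCurves

section InitialData

variable {E : Type*} [NormedAddCommGroup E] [InnerProductSpace ℂ E]

lemma norm_sq_I_mul_smul_add_I_mul_smul (a b : ℝ) (w₀ w₁ : E) :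
    ‖(Complex.I * a) • w₀ + (Complex.I * b) • w₁‖ ^ 2 =
      a ^ 2 * ‖w₀‖ ^ 2 + 2 * (a * b) * (inner ℂ w₁ w₀).re + b ^ 2 * ‖w₁‖ ^ 2 := by
  have hcross : inner ℂ ((Complex.I * a) • w₀) ((Complex.I * b) • w₁) =
      (a * b : ℝ) * inner ℂ w₀ w₁ := by
    rw [inner_smul_left, inner_smul_right, map_mul, Complex.conj_I, Complex.conj_ofReal]
    push_cast
    linear_combination -(a * b * inner ℂ w₀ w₁) * Complex.I_sq
  have hnorm (r : ℝ) : ‖Complex.I * r‖ ^ 2 = r ^ 2 := by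
    rw [norm_mul, Complex.norm_I, one_mul, Complex.norm_real, Real.norm_eq_abs, sq_abs]
  rw [norm_add_sq (𝕜 := ℂ), hcross, norm_smul, norm_smul, mul_pow, mul_pow, hnorm, hnorm,
    RCLike.re_eq_complex_re, Complex.re_ofReal_mul, ← RCLike.re_eq_complex_re,
    inner_re_symm (𝕜 := ℂ), mul_assoc 2]

lemma inner_I_mul_smul_add_I_mul_smul_add (a b : ℝ) (w₀ w₁ : E) :
    inner ℂ ((Complex.I * a) • w₀ + (Complex.I * b) • w₁) (w₀ + w₁) =
      -Complex.I * (a * (‖w₀‖ ^ 2 + inner ℂ w₀ w₁) + b * (inner ℂ w₁ w₀ + ‖w₁‖ ^ 2)) := by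
  simp only [inner_add_left, inner_add_right, inner_smul_left, inner_self_eq_norm_sq_to_K,
    Complex.coe_algebraMap, map_mul, Complex.conj_I, Complex.conj_ofReal]
  ring

/- The four conditions on the left are linear in `‖w₀‖²`, `‖w₁‖²` and `⟨w₁, w₀⟩`, with determinant
a power of `b - a`. -/
lemma unit_initial_data_iff {a b c : ℝ} (hab : a ≠ b) (hc : a * b + 1 = (a + b) * c) (w₀ w₁ : E) :
    (‖w₀ + w₁‖ = 1 ∧ ‖(Complex.I * a) • w₀ + (Complex.I * b) • w₁‖ = 1 ∧
        (inner ℂ ((Complex.I * a) • w₀ + (Complex.I * b) • w₁) (w₀ + w₁)).re = 0 ∧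
        (inner ℂ ((Complex.I * a) • w₀ + (Complex.I * b) • w₁) (Complex.I • (w₀ + w₁))).re = c) ↔
      inner ℂ w₁ w₀ = 0 ∧ (b - a) * ‖w₀‖ ^ 2 = b - c ∧ (b - a) * ‖w₁‖ ^ 2 = c - a := by
  have hba : b - a ≠ 0 := sub_ne_zero.2 hab.symm
  have hadd : ‖w₀ + w₁‖ ^ 2 = ‖w₀‖ ^ 2 + 2 * (inner ℂ w₁ w₀).re + ‖w₁‖ ^ 2 := by
    rw [norm_add_sq (𝕜 := ℂ), inner_re_symm (𝕜 := ℂ), RCLike.re_eq_complex_re]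
  rw [← pow_eq_one_iff_of_nonneg (norm_nonneg (w₀ + w₁)) two_ne_zero,
    ← pow_eq_one_iff_of_nonneg (norm_nonneg (_ + (Complex.I * b) • w₁)) two_ne_zero,
    norm_sq_I_mul_smul_add_I_mul_smul, hadd, inner_smul_right, inner_I_mul_smul_add_I_mul_smul_add,
    ← inner_conj_symm w₀ w₁, ← Complex.ofReal_pow, ← Complex.ofReal_pow, Complex.ext_iff]
  generalize inner ℂ w₁ w₀ = z
  obtain ⟨x, y⟩ := z
  simp only [Complex.mul_re, Complex.mul_im, Complex.add_re, Complex.add_im, Complex.neg_re,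
    Complex.neg_im, Complex.I_re, Complex.I_im, Complex.ofReal_re, Complex.ofReal_im,
    Complex.conj_re, Complex.conj_im, Complex.zero_re, Complex.zero_im]
  constructor
  · rintro ⟨hq, hv, hy, hx⟩
    have hx0 : x = 0 := by
      have : (b - a) ^ 2 * x = 0 := by linear_combination (a + b) * hx - hv - a * b * hq - hc
      exact (mul_eq_zero.1 this).resolve_left (pow_ne_zero 2 hba)
    have hy0 : y = 0 := by
      have : (b - a) * y = 0 := by linear_combination hy
      exact (mul_eq_zero.1 this).resolve_left hba
    subst hx0
    exact ⟨⟨rfl, hy0⟩, by linear_combination b * hq - hx, by linear_combination hx - a * hq⟩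
  · rintro ⟨⟨rfl, rfl⟩, h₀, h₁⟩
    refine ⟨?_, ?_, by ring, ?_⟩ <;> apply mul_left_cancel₀ hba
    · linear_combination h₀ + h₁
    · linear_combination a ^ 2 * h₀ + b ^ 2 * h₁ - (b - a) * hc
    · linear_combination a * h₀ + b * h₁

lemma inner_exp_smul_add_exp_smul {w₀ w₁ : E} (hw : inner ℂ w₁ w₀ = 0) (a b t₀ t₁ : ℝ) :
    inner ℂ (Complex.exp (Complex.I * a * t₁) • w₀ + Complex.exp (Complex.I * b * t₁) • w₁)
        (Complex.exp (Complex.I * a * t₀) • w₀ + Complex.exp (Complex.I * b * t₀) • w₁) =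
      Complex.exp (Complex.I * a * (t₀ - t₁)) * ‖w₀‖ ^ 2 +
        Complex.exp (Complex.I * b * (t₀ - t₁)) * ‖w₁‖ ^ 2 := by
  have hphase (r : ℝ) : (starRingEnd ℂ) (Complex.exp (Complex.I * r * t₁)) *
      Complex.exp (Complex.I * r * t₀) = Complex.exp (Complex.I * r * (t₀ - t₁)) := by
    rw [← Complex.exp_conj, ← Complex.exp_add]
    simp only [map_mul, Complex.conj_I, Complex.conj_ofReal]
    ring_nf
  simp only [inner_add_left, inner_add_right, inner_smul_left, inner_smul_right, hw,
    inner_eq_zero_symm.1 hw, inner_self_eq_norm_sq_to_K, Complex.coe_algebraMap, ← hphase]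
  ring

lemma exists_eq_cos_smul_add_I_mul_sin_smul {q p : E} {θ κ : ℝ} (hq : ‖q‖ = 1) (hp : ‖p‖ = 1)
    (hqp : inner ℂ q p = Real.cos θ + Complex.I * κ * Real.sin θ) (hθ : Real.sin θ ≠ 0) :
    ∃ u : E, ‖u‖ = 1 ∧ inner ℂ q u = κ ∧
      p = (Real.cos θ : ℂ) • q + (Complex.I * Real.sin θ) • u := by
  have hθ' : Complex.I * (Real.sin θ : ℂ) ≠ 0 :=
    mul_ne_zero Complex.I_ne_zero (Complex.ofReal_ne_zero.2 hθ)
  have hnorm : ‖p - (Real.cos θ : ℂ) • q‖ = |Real.sin θ| := by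
    have hre : (Real.cos θ + Complex.I * κ * Real.sin θ : ℂ).re = Real.cos θ := by
      simp [-Complex.ofReal_cos, -Complex.ofReal_sin]
    rw [← sq_eq_sq₀ (norm_nonneg _) (abs_nonneg _), sq_abs, norm_sub_sq (𝕜 := ℂ), hp, norm_smul,
      hq, inner_re_symm (𝕜 := ℂ), inner_smul_left, hqp, Complex.conj_ofReal,
      RCLike.re_eq_complex_re, Complex.re_ofReal_mul, hre, Complex.norm_real, mul_one,
      Real.norm_eq_abs, sq_abs]
    linear_combination -Real.sin_sq_add_cos_sq θ
  refine ⟨(Complex.I * Real.sin θ)⁻¹ • (p - (Real.cos θ : ℂ) • q), ?_, ?_, ?_⟩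
  · rw [norm_smul, hnorm, norm_inv, norm_mul, Complex.norm_I, one_mul, Complex.norm_real,
      Real.norm_eq_abs, inv_mul_cancel₀ (abs_ne_zero.2 hθ)]
  · rw [inner_smul_right, inner_sub_right, inner_smul_right, hqp, inner_self_eq_norm_sq_to_K, hq,
      inv_mul_eq_iff_eq_mul₀ hθ']
    simp only [map_one, one_pow]
    ring
  · rw [smul_inv_smul₀ hθ', add_sub_cancel]

lemma exists_orthogonal_add_eq_and_exp_smul_add_exp_smul_eq {q p : E} {θ κ : ℝ} (hq : ‖q‖ = 1)
    (hp : ‖p‖ = 1) (hqp : inner ℂ q p = Real.cos θ + Complex.I * κ * Real.sin θ)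
    (hθ : Real.sin θ ≠ 0) :
    ∃ w₀ w₁ : E, inner ℂ w₁ w₀ = 0 ∧ ‖w₀‖ ^ 2 = (1 - κ) / 2 ∧ ‖w₁‖ ^ 2 = (1 + κ) / 2 ∧
      w₀ + w₁ = q ∧ Complex.exp (-(Complex.I * θ)) • w₀ + Complex.exp (Complex.I * θ) • w₁ = p := by
  obtain ⟨u, hu, hqu, rfl⟩ := exists_eq_cos_smul_add_I_mul_sin_smul hq hp hqp hθ
  have huq : inner ℂ u q = κ := by rw [← inner_conj_symm, hqu, Complex.conj_ofReal]
  have hhalf : ‖(1 / 2 : ℂ)‖ = 1 / 2 := by norm_num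
  refine ⟨(1 / 2 : ℂ) • (q - u), (1 / 2 : ℂ) • (q + u), ?_, ?_, ?_, by module, ?_⟩
  · simp only [inner_smul_left, inner_smul_right, inner_add_left, inner_sub_right, hqu, huq,
      inner_self_eq_norm_sq_to_K, hq, hu, map_one]
    ring
  · rw [norm_smul, mul_pow, norm_sub_sq (𝕜 := ℂ), hqu, hq, hu, hhalf, RCLike.re_eq_complex_re,
      Complex.ofReal_re]
    ring
  · rw [norm_smul, mul_pow, norm_add_sq (𝕜 := ℂ), hqu, hq, hu, hhalf, RCLike.re_eq_complex_re,
      Complex.ofReal_re]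
    ring
  · rw [mul_comm Complex.I, ← neg_mul, ← Complex.cos_sub_sin_I, ← Complex.cos_add_sin_I,
      ← Complex.ofReal_cos, ← Complex.ofReal_sin]
    module

end InitialData

section RealPreliminaries

lemma sin_ne_zero_of_cos_eq_zero {θ : ℝ} (h : Real.cos θ = 0) : Real.sin θ ≠ 0 := fun hsin ↦ by
  simpa [hsin, h] using Real.sin_sq_add_cos_sq θ

lemma cos_arccos_two_div {s : ℝ} (hs : 2 ≤ s) : Real.cos (Real.arccos (2 / s)) = 2 / s :=
  Real.cos_arccos (by linarith [show 0 ≤ 2 / s by positivity]) (div_le_one_of_le₀ hs (by linarith))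

lemma sqrt_one_sub_four_div_sq {s : ℝ} (hs : 0 < s) :
    Real.sqrt (1 - 4 / s ^ 2) = Real.sqrt (s ^ 2 - 4) / s := by
  rw [show 1 - 4 / s ^ 2 = (s ^ 2 - 4) / s ^ 2 by field_simp, Real.sqrt_div' _ (sq_nonneg s),
    Real.sqrt_sq hs.le]

end RealPreliminaries

section Invariants

variable (s ψ : ℝ)

lemma normC_sq_eq_add_sq : normC s ψ ^ 2 = (-s / 2 + Real.cos ψ) ^ 2 + Real.sin ψ ^ 2 := by
  have h : s ^ 2 / 4 + 1 - s * Real.cos ψ = (-s / 2 + Real.cos ψ) ^ 2 + Real.sin ψ ^ 2 := by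
    linear_combination -Real.sin_sq_add_cos_sq ψ
  rw [normC, Real.sq_sqrt (h ▸ by positivity), h]

lemma normC_sq : normC s ψ ^ 2 = s ^ 2 / 4 + 1 - s * Real.cos ψ := by
  linear_combination normC_sq_eq_add_sq s ψ + Real.sin_sq_add_cos_sq ψ

variable {s} in
lemma normC_pos (hs : s ^ 2 ≠ 4) : 0 < normC s ψ := by
  refine (Real.sqrt_nonneg _).lt_of_ne' fun h ↦ hs ?_
  change normC s ψ = 0 at h
  have hsum := normC_sq_eq_add_sq s ψ
  rw [h, zero_pow two_ne_zero, eq_comm,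
    add_eq_zero_iff_of_nonneg (sq_nonneg _) (sq_nonneg _)] at hsum
  have hcos : Real.cos ψ = s / 2 := by linear_combination pow_eq_zero_iff two_ne_zero |>.1 hsum.1
  have := Real.sin_sq_add_cos_sq ψ
  rw [hsum.2, hcos] at this
  linear_combination 4 * this

lemma cos_argC : Real.cos (argC s ψ) = (-s / 2 + Real.cos ψ) / normC s ψ := by
  have hnonneg : 0 ≤ normC s ψ := Real.sqrt_nonneg _
  have hle : (-s / 2 + Real.cos ψ) ^ 2 ≤ normC s ψ ^ 2 := by
    rw [normC_sq_eq_add_sq]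
    exact le_add_of_nonneg_right (sq_nonneg _)
  have habs : |(-s / 2 + Real.cos ψ) / normC s ψ| ≤ 1 := by
    rw [abs_div, abs_of_nonneg hnonneg]
    exact div_le_one_of_le₀ (abs_le_of_sq_le_sq hle hnonneg) hnonneg
  exact Real.cos_arccos (neg_le_of_abs_le habs) (le_of_abs_le habs)

lemma half_sub_normC_mul_half_add_normC :
    (s / 2 - normC s ψ) * (s / 2 + normC s ψ) = s * Real.cos ψ - 1 := by
  linear_combination -normC_sq s ψ

end Invariants

/-- The Hermitian product `⟨γ(t₀), γ(t₁)⟩` of two points of a unit-speed magnetic geodesic of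
strength `s` and contact angle `ψ`, as a function of the elapsed time `t = t₀ - t₁`. -/
def magCorr (s ψ t : ℝ) : ℂ :=
  Complex.exp (Complex.I * s * t / 2) *
    (Real.cos (normC s ψ * t) + Complex.I * Real.cos (argC s ψ) * Real.sin (normC s ψ * t))

section MagneticGeodesics

variable {n : ℕ} {s ψ : ℝ}

lemma magCorr_eq_exp_add_exp (t : ℝ) :
    magCorr s ψ t =
      Complex.exp (Complex.I * (s / 2 - normC s ψ : ℝ) * t) * ((1 - Real.cos (argC s ψ)) / 2) +
      Complex.exp (Complex.I * (s / 2 + normC s ψ : ℝ) * t) * ((1 + Real.cos (argC s ψ)) / 2) := by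
  have h₀ : Complex.exp (Complex.I * (s / 2 - normC s ψ : ℝ) * t) =
      Complex.exp (Complex.I * s * t / 2) * Complex.exp (-(normC s ψ * t : ℝ) * Complex.I) := by
    rw [← Complex.exp_add]
    push_cast
    ring_nf
  have h₁ : Complex.exp (Complex.I * (s / 2 + normC s ψ : ℝ) * t) =
      Complex.exp (Complex.I * s * t / 2) * Complex.exp ((normC s ψ * t : ℝ) * Complex.I) := by
    rw [← Complex.exp_add]
    push_cast
    ring_nf
  rw [magCorr, h₀, h₁, ← Complex.cos_sub_sin_I, ← Complex.cos_add_sin_I, ← Complex.ofReal_cos,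
    ← Complex.ofReal_sin]
  ring

lemma magCurve_eq_exp_smul_add_exp_smul (w₀ w₁ : EuclideanSpace ℂ (Fin (n + 1))) (t : ℝ) :
    magCurve s ψ w₀ w₁ t =
      Complex.exp (Complex.I * (s / 2 - normC s ψ : ℝ) * t) • w₀ +
      Complex.exp (Complex.I * (s / 2 + normC s ψ : ℝ) * t) • w₁ := by
  rw [magCurve, smul_add, smul_smul, smul_smul, ← Complex.exp_add, ← Complex.exp_add]
  congr 3 <;> push_cast <;> ring

lemma magCurve_zero (w₀ w₁ : EuclideanSpace ℂ (Fin (n + 1))) :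
    magCurve s ψ w₀ w₁ 0 = w₀ + w₁ := by
  simp [magCurve]

lemma contDiff_magCurve {k : WithTop ℕ∞} (w₀ w₁ : EuclideanSpace ℂ (Fin (n + 1))) :
    ContDiff ℝ k (magCurve s ψ w₀ w₁) := by
  have hofReal : ContDiff ℝ k ((↑) : ℝ → ℂ) := Complex.ofRealCLM.contDiff
  unfold magCurve
  fun_prop

lemma deriv_magCurve (w₀ w₁ : EuclideanSpace ℂ (Fin (n + 1))) :
    deriv (magCurve s ψ w₀ w₁) =
      magCurve s ψ ((Complex.I * (s / 2 - normC s ψ : ℝ)) • w₀)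
        ((Complex.I * (s / 2 + normC s ψ : ℝ)) • w₁) := by
  ext1 t
  rw [funext (magCurve_eq_exp_smul_add_exp_smul w₀ w₁), magCurve_eq_exp_smul_add_exp_smul]
  exact ((hasDerivAt_exp_mul_smul _ w₀ t).add (hasDerivAt_exp_mul_smul _ w₁ t)).deriv

lemma magCurve_ode (w₀ w₁ : EuclideanSpace ℂ (Fin (n + 1))) (t : ℝ) :
    deriv (deriv (magCurve s ψ w₀ w₁)) t - ((s : ℂ) * Complex.I) • deriv (magCurve s ψ w₀ w₁) t
      + ((1 : ℂ) - (s : ℂ) * (Real.cos ψ : ℂ)) • magCurve s ψ w₀ w₁ t = 0 := by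
  have hprod : ((s / 2 - normC s ψ) * (s / 2 + normC s ψ) : ℂ) = s * Complex.cos ψ - 1 :=
    mod_cast half_sub_normC_mul_half_add_normC s ψ
  simp only [deriv_magCurve, magCurve_eq_exp_smul_add_exp_smul]
  push_cast
  match_scalars
  · linear_combination Complex.exp (Complex.I * (s / 2 - normC s ψ) * t) *
      (hprod - (s / 2 - normC s ψ) * (s / 2 + normC s ψ) * Complex.I_sq)
  · linear_combination Complex.exp (Complex.I * (s / 2 + normC s ψ) * t) *
      (hprod - (s / 2 - normC s ψ) * (s / 2 + normC s ψ) * Complex.I_sq)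

lemma isMagGeo_magCurve_iff (hR : normC s ψ ≠ 0) (w₀ w₁ : EuclideanSpace ℂ (Fin (n + 1))) :
    IsMagGeo s ψ (magCurve s ψ w₀ w₁) ↔
      inner ℂ w₁ w₀ = 0 ∧ ‖w₀‖ ^ 2 = (1 - Real.cos (argC s ψ)) / 2 ∧
        ‖w₁‖ ^ 2 = (1 + Real.cos (argC s ψ)) / 2 := by
  have hdata := unit_initial_data_iff (a := s / 2 - normC s ψ) (b := s / 2 + normC s ψ)
    (c := Real.cos ψ) (fun h ↦ hR (by linarith))
    (by linear_combination half_sub_normC_mul_half_add_normC s ψ) w₀ w₁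
  simp only [IsMagGeo, contDiff_magCurve, magCurve_ode, implies_true, true_and]
  rw [deriv_magCurve, magCurve_zero, magCurve_zero, herm, herm, hdata]
  refine and_congr_right' (and_congr ?_ ?_) <;> rw [cos_argC] <;> field_simp <;>
    constructor <;> intro h <;> linear_combination h

lemma IsMagGeo.exists_eq_magCurve {γ : ℝ → EuclideanSpace ℂ (Fin (n + 1))}
    (hγ : IsMagGeo s ψ γ) (hR : normC s ψ ≠ 0) : ∃ w₀ w₁, γ = magCurve s ψ w₀ w₁ := by
  obtain ⟨hsmooth, hode, -⟩ := hγ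
  have hprod : ((s / 2 - normC s ψ : ℝ) * (s / 2 + normC s ψ : ℝ) : ℂ) = s * Real.cos ψ - 1 :=
    mod_cast half_sub_normC_mul_half_add_normC s ψ
  have hγ' : ∀ t, HasDerivAt γ (deriv γ t) t := fun t ↦
    (hsmooth.differentiable (by simp) t).hasDerivAt
  have hγ'' : ∀ t, HasDerivAt (deriv γ)
      ((Complex.I * (s / 2 - normC s ψ : ℝ) + Complex.I * (s / 2 + normC s ψ : ℝ)) • deriv γ t -
        (Complex.I * (s / 2 - normC s ψ : ℝ) * (Complex.I * (s / 2 + normC s ψ : ℝ))) • γ t) t := by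
    intro t
    have hsum : Complex.I * (s / 2 - normC s ψ : ℝ) + Complex.I * (s / 2 + normC s ψ : ℝ) =
        s * Complex.I := by
      push_cast
      ring
    have hdiff := (contDiff_infty_iff_deriv.1 hsmooth).2.differentiable (by simp)
    refine (hdiff t).hasDerivAt.congr_deriv ?_
    rw [hsum, mul_mul_mul_comm, Complex.I_mul_I, hprod, ← sub_eq_zero, ← hode t]
    module
  have hne : Complex.I * (s / 2 - normC s ψ : ℝ) ≠ Complex.I * (s / 2 + normC s ψ : ℝ) := by
    rw [Ne, mul_right_inj' Complex.I_ne_zero, Complex.ofReal_inj]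
    exact fun h ↦ hR (by linarith)
  obtain ⟨w₀, w₁, hw⟩ := exists_eq_exp_smul_add_exp_smul hne hγ' hγ''
  exact ⟨w₀, w₁, funext fun t ↦ (hw t).trans (magCurve_eq_exp_smul_add_exp_smul w₀ w₁ t).symm⟩

theorem IsMagGeo.herm_eq_magCorr {γ : ℝ → EuclideanSpace ℂ (Fin (n + 1))} (hγ : IsMagGeo s ψ γ)
    (hs : s ^ 2 ≠ 4) (t₀ t₁ : ℝ) : herm (γ t₀) (γ t₁) = magCorr s ψ (t₀ - t₁) := by
  have hR := (normC_pos ψ hs).ne'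
  obtain ⟨w₀, w₁, rfl⟩ := hγ.exists_eq_magCurve hR
  obtain ⟨hw, h₀, h₁⟩ := (isMagGeo_magCurve_iff hR w₀ w₁).1 hγ
  rw [herm, magCurve_eq_exp_smul_add_exp_smul, magCurve_eq_exp_smul_add_exp_smul,
    inner_exp_smul_add_exp_smul hw, magCorr_eq_exp_add_exp,
    ← Complex.ofReal_pow, ← Complex.ofReal_pow, h₀, h₁]
  push_cast
  rfl

theorem exists_isMagGeo_of_herm_eq_magCorr {q₀ q₁ : EuclideanSpace ℂ (Fin (n + 1))} {t : ℝ}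
    (hq₀ : ‖q₀‖ = 1) (hq₁ : ‖q₁‖ = 1) (hq : herm q₀ q₁ = magCorr s ψ t)
    (ht : Real.sin (normC s ψ * t) ≠ 0) :
    ∃ γ, IsMagGeo s ψ γ ∧ γ 0 = q₁ ∧ γ t = q₀ := by
  have hR : normC s ψ ≠ 0 := fun h ↦ ht (by simp [h])
  have hphase :
      Complex.exp (Complex.I * s * t / 2) * Complex.exp (-(Complex.I * s * t / 2)) = 1 := by
    rw [← Complex.exp_add, add_neg_cancel, Complex.exp_zero]
  have hp : ‖Complex.exp (-(Complex.I * s * t / 2)) • q₀‖ = 1 := by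
    rw [norm_smul, hq₀, mul_one,
      show -(Complex.I * s * t / 2) = Complex.I * (-(s * t / 2) : ℝ) by push_cast; ring,
      Complex.norm_exp_I_mul_ofReal]
  have hqp : inner ℂ q₁ (Complex.exp (-(Complex.I * s * t / 2)) • q₀) =
      Real.cos (normC s ψ * t) +
        Complex.I * Real.cos (argC s ψ) * Real.sin (normC s ψ * t) := by
    rw [herm, magCorr] at hq
    rw [inner_smul_right, hq, ← mul_assoc, mul_comm (Complex.exp (-_)), hphase, one_mul]
  obtain ⟨w₀, w₁, hw, h₀, h₁, hsum, hrot⟩ :=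
    exists_orthogonal_add_eq_and_exp_smul_add_exp_smul_eq hq₁ hp hqp ht
  refine ⟨_, (isMagGeo_magCurve_iff hR w₀ w₁).2 ⟨hw, h₀, h₁⟩, (magCurve_zero w₀ w₁).trans hsum, ?_⟩
  rw [Complex.ofReal_mul, ← mul_assoc] at hrot
  rw [magCurve, hrot, smul_smul, hphase, one_smul]

end MagneticGeodesics

section Extremal

variable {s ψ t : ℝ}

lemma norm_magCorr_sq (s ψ t : ℝ) :
    ‖magCorr s ψ t‖ ^ 2 =
      Real.cos (normC s ψ * t) ^ 2 + Real.cos (argC s ψ) ^ 2 * Real.sin (normC s ψ * t) ^ 2 := by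
  have hphase : ‖Complex.exp (Complex.I * s * t / 2)‖ = 1 := by
    rw [show Complex.I * s * t / 2 = Complex.I * (s * t / 2 : ℝ) by push_cast; ring,
      Complex.norm_exp_I_mul_ofReal]
  rw [magCorr, norm_mul, hphase, one_mul, ← mul_pow, ← Complex.normSq_add_mul_I,
    Complex.normSq_eq_norm_sq, Complex.ofReal_mul]
  ring_nf

/- Multiplied by the positive factor `s² |C_s(ψ)|²`, the excess of `|⟨γ(t₀), γ(t₁)⟩|²` over the
critical value `1 - 4/s²` is a sum of squares. -/
lemma norm_magCorr_sq_sub_eq_sq_add_sq (hs : s ≠ 0) (hR : normC s ψ ≠ 0) :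
    s ^ 2 * normC s ψ ^ 2 * (‖magCorr s ψ t‖ ^ 2 - (1 - 4 / s ^ 2)) =
      (2 * normC s ψ * Real.cos (normC s ψ * t)) ^ 2 +
        ((s * Real.cos ψ - 2) * Real.sin (normC s ψ * t)) ^ 2 := by
  have hκ : normC s ψ * Real.cos (argC s ψ) = -s / 2 + Real.cos ψ := by
    rw [cos_argC, mul_div_cancel₀ _ hR]
  have hs4 : s ^ 2 * (4 / s ^ 2) = 4 := mul_div_cancel₀ _ (pow_ne_zero 2 hs)
  rw [norm_magCorr_sq]
  linear_combination
    s ^ 2 * Real.sin (normC s ψ * t) ^ 2 *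
      (normC s ψ * Real.cos (argC s ψ) + (-s / 2 + Real.cos ψ)) * hκ +
    normC s ψ ^ 2 * hs4 +
    (s ^ 2 - 4) * normC s ψ ^ 2 * Real.sin_sq_add_cos_sq (normC s ψ * t) +
    (4 - s ^ 2) * Real.sin (normC s ψ * t) ^ 2 * normC_sq s ψ

lemma cos_eq_of_norm_magCorr_eq (hs : 2 < s)
    (h : ‖magCorr s ψ t‖ = Real.sqrt (1 - 4 / s ^ 2)) :
    Real.cos ψ = 2 / s ∧ Real.cos (normC s ψ * t) = 0 := by
  have hs0 : s ≠ 0 := by linarith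
  have hR : normC s ψ ≠ 0 := (normC_pos ψ (by nlinarith)).ne'
  have hsum := norm_magCorr_sq_sub_eq_sq_add_sq (t := t) hs0 hR
  rw [h, sqrt_one_sub_four_div_sq (by linarith), div_pow, Real.sq_sqrt (by nlinarith),
    show (s ^ 2 - 4) / s ^ 2 - (1 - 4 / s ^ 2) = 0 by field_simp; ring, mul_zero, eq_comm,
    add_eq_zero_iff_of_nonneg (sq_nonneg _) (sq_nonneg _), sq_eq_zero_iff, sq_eq_zero_iff] at hsum
  have hcos : Real.cos (normC s ψ * t) = 0 :=
    (mul_eq_zero.1 hsum.1).resolve_left (mul_ne_zero two_ne_zero hR)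
  have hψ : s * Real.cos ψ - 2 = 0 :=
    (mul_eq_zero.1 hsum.2).resolve_right (sin_ne_zero_of_cos_eq_zero hcos)
  exact ⟨by rw [eq_div_iff hs0]; linear_combination hψ, hcos⟩

lemma normC_eq_of_cos_eq_two_div (hs : s ≠ 0) (hψ : Real.cos ψ = 2 / s) :
    normC s ψ = Real.sqrt (s ^ 2 - 4) / 2 := by
  rw [normC, hψ, show s ^ 2 / 4 + 1 - s * (2 / s) = (s ^ 2 - 4) / 2 ^ 2 by field_simp; ring,
    Real.sqrt_div' _ (by positivity), Real.sqrt_sq zero_le_two]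

lemma cos_argC_eq_of_cos_eq_two_div (hs : 2 < s) (hψ : Real.cos ψ = 2 / s) :
    Real.cos (argC s ψ) = -Real.sqrt (1 - 4 / s ^ 2) := by
  have hs0 : 0 < s := by linarith
  have hQ : 0 < Real.sqrt (s ^ 2 - 4) := Real.sqrt_pos.2 (by nlinarith)
  have hQ2 : Real.sqrt (s ^ 2 - 4) ^ 2 = s ^ 2 - 4 := Real.sq_sqrt (by nlinarith)
  rw [cos_argC, normC_eq_of_cos_eq_two_div hs0.ne' hψ, sqrt_one_sub_four_div_sq hs0, hψ]
  field_simp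
  linear_combination hQ2

lemma magCorr_eq_sqrt_mul_exp (hs : 2 < s) (hψ : Real.cos ψ = 2 / s)
    (ht : Real.cos (normC s ψ * t) = 0) :
    magCorr s ψ t = (Real.sqrt (1 - 4 / s ^ 2) : ℂ) * Complex.exp (Complex.I *
      (((1 - s / Real.sqrt (s ^ 2 - 4)) * -(normC s ψ * t) : ℝ) : ℂ)) := by
  have hQ : Real.sqrt (s ^ 2 - 4) ≠ 0 := (Real.sqrt_pos.2 (by nlinarith)).ne'
  have hexponent : (1 - s / Real.sqrt (s ^ 2 - 4)) * -(normC s ψ * t) =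
      s * t / 2 + -(normC s ψ * t) := by
    rw [normC_eq_of_cos_eq_two_div (by linarith) hψ]
    field_simp
    ring
  have hrot : Complex.exp (-(normC s ψ * t : ℝ) * Complex.I) =
      -(Real.sin (normC s ψ * t) * Complex.I) := by
    rw [← Complex.cos_sub_sin_I, ← Complex.ofReal_cos, ht, ← Complex.ofReal_sin,
      Complex.ofReal_zero, zero_sub]
  rw [hexponent, Complex.ofReal_add, mul_add, Complex.exp_add, Complex.ofReal_neg,
    mul_comm Complex.I (-_), hrot, magCorr, ht, cos_argC_eq_of_cos_eq_two_div hs hψ]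
  push_cast
  ring_nf

end Extremal

/-- subcritical case `s > 2`, boundary points: if
`|⟨q₀,q₁⟩| = sqrt(1 − 4/s²)` then, with `β = 1 − s/sqrt(s² − 4)`, the two points
are connected by a unit-speed magnetic geodesic of strength `s` iff
`⟨q₀,q₁⟩ = sqrt(1 − 4/s²)·e^{iβ(π/2 + mπ)}` for some integer `m`; moreover any
connecting geodesic has contact angle `arccos(2/s)`. -/
theorem stmt_9 {n : ℕ} (s : ℝ) (hs : 2 < s)
    (q₀ q₁ : EuclideanSpace ℂ (Fin (n + 1)))
    (hq₀ : ‖q₀‖ = 1) (hq₁ : ‖q₁‖ = 1)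
    (hbd : ‖herm q₀ q₁‖ = Real.sqrt (1 - 4 / s ^ 2)) :
    ((∃ ψ ∈ Set.Icc (0 : ℝ) π, ∃ γ : ℝ → EuclideanSpace ℂ (Fin (n + 1)),
        IsMagGeo s ψ γ ∧ ∃ t₀ t₁ : ℝ, γ t₀ = q₀ ∧ γ t₁ = q₁) ↔
      ∃ m : ℤ, herm q₀ q₁ = (Real.sqrt (1 - 4 / s ^ 2) : ℂ) *
        Complex.exp (Complex.I *
          (((1 - s / Real.sqrt (s ^ 2 - 4)) * (π / 2 + (m : ℝ) * π) : ℝ) : ℂ))) ∧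
    (∀ ψ ∈ Set.Icc (0 : ℝ) π, ∀ γ : ℝ → EuclideanSpace ℂ (Fin (n + 1)),
      IsMagGeo s ψ γ → (∃ t₀ t₁ : ℝ, γ t₀ = q₀ ∧ γ t₁ = q₁) →
        ψ = Real.arccos (2 / s)) := by
  have hs4 : s ^ 2 ≠ 4 := by nlinarith
  refine ⟨⟨?_, ?_⟩, ?_⟩
  · rintro ⟨ψ, -, γ, hγ, t₀, t₁, rfl, rfl⟩
    rw [hγ.herm_eq_magCorr hs4] at hbd ⊢
    obtain ⟨hψ, hcos⟩ := cos_eq_of_norm_magCorr_eq hs hbd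
    obtain ⟨k, hk⟩ := Real.cos_eq_zero_iff.1 hcos
    have hphase : -(normC s ψ * (t₀ - t₁)) = π / 2 + ((-k - 1 : ℤ) : ℝ) * π := by
      rw [hk]
      push_cast
      ring
    exact ⟨-k - 1, hphase ▸ magCorr_eq_sqrt_mul_exp hs hψ hcos⟩
  · rintro ⟨m, hm⟩
    have hψ := cos_arccos_two_div hs.le
    obtain ⟨t, ht⟩ : ∃ t, normC s (Real.arccos (2 / s)) * t = -(π / 2 + m * π) :=
      ⟨_, mul_div_cancel₀ _ (normC_pos _ hs4).ne'⟩
    have hcos : Real.cos (normC s (Real.arccos (2 / s)) * t) = 0 := by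
      rw [ht, Real.cos_neg, Real.cos_add_int_mul_pi, Real.cos_pi_div_two, mul_zero]
    obtain ⟨γ, hγ, h₁, h₀⟩ := exists_isMagGeo_of_herm_eq_magCorr hq₀ hq₁
      (by rw [hm, magCorr_eq_sqrt_mul_exp hs hψ hcos, ht, neg_neg])
      (sin_ne_zero_of_cos_eq_zero hcos)
    exact ⟨_, ⟨Real.arccos_nonneg _, Real.arccos_le_pi _⟩, γ, hγ, t, 0, h₀, h₁⟩
  · rintro ψ hψ γ hγ ⟨t₀, t₁, rfl, rfl⟩
    rw [hγ.herm_eq_magCorr hs4] at hbd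
    rw [← (cos_eq_of_norm_magCorr_eq hs hbd).1, Real.arccos_cos hψ.1 hψ.2]
end
end

section
/- Let s > 0. Define ρ_s : (0,π) → ℝ by ρ_s(ψ) := (s/2 − |C_s(ψ)|)/(s/2 + |C_s(ψ)|), where |C_s(ψ)| = sqrt(s²/4 + 1 − s·cos ψ). Then ρ_s is strictly monotonically decreasing and is a bijection from (0,π) onto the open interval (ρ_s⁻, ρ_s⁺), where ρ_s⁻ = −1/(1+s), and ρ_s⁺ = s − 1 if 0 < s ≤ 2 while ρ_s⁺ = 1/(s−1) if s ≥ 2. -/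
noncomputable section

open scoped Real

/-! `ρ_s` is the composition of `|C_s|`, which increases strictly from `|s/2 - 1|` to `s/2 + 1` on
`[0, π]`, with the Möbius map `x ↦ (s/2 - x) / (s/2 + x)`, which is strictly decreasing for
`x > -s/2`. So `ρ_s` is continuous and strictly decreasing on the closed interval `[0, π]`, and it
maps `(0, π)` onto the open interval between its endpoint values; the two cases of `ρ_s⁺` come from
the sign of `s/2 - 1`. -/

lemma strictAntiOn_sub_div_add {K : Type*} [Field K] [LinearOrder K] [IsStrictOrderedRing K]
    {a : K} (ha : 0 < a) : StrictAntiOn (fun x => (a - x) / (a + x)) (Set.Ioi (-a)) := by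
  intro x hx y hy hxy
  have hax : 0 < a + x := neg_lt_iff_pos_add'.1 hx
  have hay : 0 < a + y := neg_lt_iff_pos_add'.1 hy
  have h : a * x < a * y := mul_lt_mul_of_pos_left hxy ha
  rw [div_lt_div_iff₀ hay hax]
  linarith

lemma normC_nonneg (s ψ : ℝ) : 0 ≤ normC s ψ := Real.sqrt_nonneg _

lemma normC_radicand_nonneg (s ψ : ℝ) : 0 ≤ s ^ 2 / 4 + 1 - s * Real.cos ψ :=
  calc
    0 ≤ (-s / 2 + Real.cos ψ) ^ 2 + Real.sin ψ ^ 2 := by positivity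
    _ = s ^ 2 / 4 + 1 - s * Real.cos ψ := by rw [Real.sin_sq]; ring

lemma normC_zero (s : ℝ) : normC s 0 = |s / 2 - 1| := by
  rw [normC, Real.cos_zero, ← Real.sqrt_sq_eq_abs]
  ring_nf

lemma normC_pi (s : ℝ) : normC s π = |s / 2 + 1| := by
  rw [normC, Real.cos_pi, ← Real.sqrt_sq_eq_abs]
  ring_nf

lemma continuous_normC (s : ℝ) : Continuous (normC s) := by
  unfold normC
  fun_prop

lemma strictMonoOn_normC {s : ℝ} (hs : 0 < s) : StrictMonoOn (normC s) (Set.Icc 0 π) := by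
  intro a ha b hb hab
  have hcos : s * Real.cos b < s * Real.cos a :=
    mul_lt_mul_of_pos_left (Real.strictAntiOn_cos ha hb hab) hs
  exact Real.sqrt_lt_sqrt (normC_radicand_nonneg s a) (by linarith)

/-- The rotation number `ρ_s(ψ)`, the ratio of the two rotation frequencies of a unit-speed
magnetic geodesic. It is defined for every real `ψ`, so that the bounds of its range on `(0, π)`
are its values at the endpoints. -/
def rotationNumber (s ψ : ℝ) : ℝ := (s / 2 - normC s ψ) / (s / 2 + normC s ψ)

lemma rotationNumber_zero (s : ℝ) :
    rotationNumber s 0 = if s ≤ 2 then s - 1 else 1 / (s - 1) := by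
  rw [rotationNumber, normC_zero]
  split_ifs with h
  · rw [abs_of_nonpos (by linarith)]
    ring_nf
  · rw [abs_of_pos (by linarith)]
    ring_nf

lemma rotationNumber_pi {s : ℝ} (hs : 0 ≤ s) : rotationNumber s π = -(1 / (1 + s)) := by
  rw [rotationNumber, normC_pi, abs_of_pos (by linarith)]
  ring_nf

lemma continuous_rotationNumber {s : ℝ} (hs : 0 < s) : Continuous (rotationNumber s) := by
  have hnormC := continuous_normC s
  have hdenom (ψ : ℝ) : s / 2 + normC s ψ ≠ 0 :=
    (add_pos_of_pos_of_nonneg (half_pos hs) (normC_nonneg s ψ)).ne'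
  exact (continuous_const.sub hnormC).div (continuous_const.add hnormC) hdenom

lemma strictAntiOn_rotationNumber {s : ℝ} (hs : 0 < s) :
    StrictAntiOn (rotationNumber s) (Set.Icc 0 π) :=
  (strictAntiOn_sub_div_add (half_pos hs)).comp_strictMonoOn (strictMonoOn_normC hs)
    fun ψ _ => (neg_lt_zero.2 (half_pos hs)).trans_le (normC_nonneg s ψ)

/-- the rotation number `ρ_s(ψ) = (s/2 − |C_s(ψ)|)/(s/2 + |C_s(ψ)|)`
is strictly decreasing on `(0,π)` and a bijection onto `(ρ_s⁻, ρ_s⁺)` with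
`ρ_s⁻ = −1/(1+s)` and `ρ_s⁺ = s − 1` for `s ≤ 2`, `ρ_s⁺ = 1/(s−1)` for `s ≥ 2`. -/
theorem stmt_10 (s : ℝ) (hs : 0 < s) :
    StrictAntiOn (fun ψ : ℝ => (s / 2 - normC s ψ) / (s / 2 + normC s ψ))
      (Set.Ioo 0 π) ∧
    Set.BijOn (fun ψ : ℝ => (s / 2 - normC s ψ) / (s / 2 + normC s ψ))
      (Set.Ioo 0 π)
      (Set.Ioo (-(1 / (1 + s))) (if s ≤ 2 then s - 1 else 1 / (s - 1))) := by
  have hanti := strictAntiOn_rotationNumber hs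
  have himage := (continuous_rotationNumber hs).continuousOn.image_Ioo_of_strictAntiOn
    Real.pi_pos.le hanti
  rw [rotationNumber_zero, rotationNumber_pi hs.le] at himage
  have hanti' := hanti.mono Set.Ioo_subset_Icc_self
  exact ⟨hanti', himage ▸ hanti'.injOn.bijOn_image⟩
end
end

section
/- Let q₀, q₁ be points on the unit sphere S³ ⊂ ℂ², and let π denote the Hopf map π(z₁,z₂) := (conj(z₁)·z₂, (|z₁|² − |z₂|²)/2) ∈ ℂ × ℝ ≅ ℝ³. Then: (i) |π(q)| = 1/2 for every q ∈ S³, i.e. π takes values in the sphere S²(1/2) of radius 1/2; (ii) 4·⟨π(q₀), π(q₁)⟩_{ℝ³} = 2·|⟨q₀,q₁⟩|² − 1; consequently (iii) the spherical (geodesic) distance on S²(1/2) between π(q₀) and π(q₁), namely (1/2)·arccos(4·⟨π(q₀),π(q₁)⟩_{ℝ³}), equals arccos(|⟨q₀,q₁⟩|). -/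
noncomputable section

open scoped Real

/-- Hermitian product on `ℂ²`, ℂ-linear in the first argument (paper convention). -/
def hermC2 (x y : ℂ × ℂ) : ℂ :=
  x.1 * (starRingEnd ℂ) y.1 + x.2 * (starRingEnd ℂ) y.2

/-- The Hopf map `π(z₁,z₂) = (conj(z₁)·z₂, (|z₁|² − |z₂|²)/2) ∈ ℂ × ℝ ≅ ℝ³`. -/
def hopfMap (z : ℂ × ℂ) : ℂ × ℝ :=
  ((starRingEnd ℂ) z.1 * z.2, (‖z.1‖ ^ 2 - ‖z.2‖ ^ 2) / 2)

/-- Euclidean inner product on `ℂ × ℝ ≅ ℝ³`. -/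
def innerR3 (p q : ℂ × ℝ) : ℝ := ((starRingEnd ℂ) p.1 * q.1).re + p.2 * q.2

/-!
Everything follows from the identity `4⟨π(x), π(y)⟩ = 2|⟨x, y⟩|² - |x|²|y|²` on `ℂ²`. Its
diagonal gives `|π(x)| = |x|² / 2`. Off the diagonal, dividing by `|x|²|y|²` turns it into
`cos ∠(π(x), π(y)) = 2t² - 1` with `t = |⟨x, y⟩| / (|x||y|) ∈ [0, 1]`, and the double-angle formula
shows that `π` doubles the angle `arccos t` between complex lines.
-/

open WithLp

theorem hermC2_eq_inner (x y : ℂ × ℂ) : hermC2 x y = inner ℂ (toLp 2 y) (toLp 2 x) := by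
  simp only [hermC2, prod_inner_apply, RCLike.inner_apply]

theorem innerR3_eq_inner (p q : ℂ × ℝ) : innerR3 p q = inner ℝ (toLp 2 p) (toLp 2 q) := by
  simp only [innerR3, prod_inner_apply, Complex.inner, RCLike.inner_apply, conj_trivial, mul_comm]

theorem angle_eq_arccos_four_mul_innerR3 {p q : ℂ × ℝ}
    (hp : ‖toLp 2 p‖ = 1 / 2) (hq : ‖toLp 2 q‖ = 1 / 2) :
    InnerProductGeometry.angle (toLp 2 p) (toLp 2 q) = Real.arccos (4 * innerR3 p q) := by
  rw [InnerProductGeometry.angle, ← innerR3_eq_inner, hp, hq]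
  congr 1
  ring

theorem norm_hermC2_self (x : ℂ × ℂ) : ‖hermC2 x x‖ = ‖toLp 2 x‖ ^ 2 := by
  rw [hermC2_eq_inner, inner_self_eq_norm_sq_to_K, norm_pow, RCLike.norm_ofReal, abs_norm]

theorem norm_hermC2_le (x y : ℂ × ℂ) : ‖hermC2 x y‖ ≤ ‖toLp 2 x‖ * ‖toLp 2 y‖ := by
  rw [hermC2_eq_inner, mul_comm]
  exact norm_inner_le_norm _ _

theorem norm_hermC2_sq (x y : ℂ × ℂ) :
    ‖hermC2 x y‖ ^ 2 = (‖x.1‖ * ‖y.1‖) ^ 2 + (‖x.2‖ * ‖y.2‖) ^ 2 +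
      2 * ((starRingEnd ℂ) (hopfMap x).1 * (hopfMap y).1).re := by
  have cross_term : x.1 * (starRingEnd ℂ) y.1 * (starRingEnd ℂ) (x.2 * (starRingEnd ℂ) y.2) =
      (starRingEnd ℂ) (hopfMap x).1 * (hopfMap y).1 := by
    simp only [hopfMap, map_mul, Complex.conj_conj]
    ring
  rw [hermC2, Complex.sq_norm, Complex.normSq_add, cross_term]
  simp only [← Complex.sq_norm, norm_mul, RCLike.norm_conj]

theorem four_mul_innerR3_hopfMap (x y : ℂ × ℂ) :
    4 * innerR3 (hopfMap x) (hopfMap y) =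
      2 * ‖hermC2 x y‖ ^ 2 - ‖toLp 2 x‖ ^ 2 * ‖toLp 2 y‖ ^ 2 := by
  rw [norm_hermC2_sq, prod_norm_sq_eq_of_L2, prod_norm_sq_eq_of_L2]
  simp only [innerR3, hopfMap, toLp_fst, toLp_snd]
  ring

theorem norm_toLp_hopfMap (x : ℂ × ℂ) : ‖toLp 2 (hopfMap x)‖ = ‖toLp 2 x‖ ^ 2 / 2 := by
  have diagonal := four_mul_innerR3_hopfMap x x
  rw [innerR3_eq_inner, real_inner_self_eq_norm_sq, norm_hermC2_self] at diagonal
  refine (sq_eq_sq₀ (by positivity) (by positivity)).mp ?_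
  linear_combination diagonal / 4

theorem arccos_two_mul_sq_sub_one {t : ℝ} (ht₀ : 0 ≤ t) (ht₁ : t ≤ 1) :
    Real.arccos (2 * t ^ 2 - 1) = 2 * Real.arccos t := by
  have double_angle : Real.cos (2 * Real.arccos t) = 2 * t ^ 2 - 1 := by
    rw [Real.cos_two_mul, Real.cos_arccos (by linarith) ht₁]
  have arccos_le : Real.arccos t ≤ π / 2 := Real.arccos_le_pi_div_two.2 ht₀
  rw [← double_angle, Real.arccos_cos (by linarith [Real.arccos_nonneg t]) (by linarith)]

theorem angle_hopfMap {x y : ℂ × ℂ} (hx : x ≠ 0) (hy : y ≠ 0) :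
    InnerProductGeometry.angle (toLp 2 (hopfMap x)) (toLp 2 (hopfMap y)) =
      2 * Real.arccos (‖hermC2 x y‖ / (‖toLp 2 x‖ * ‖toLp 2 y‖)) := by
  have hx' : ‖toLp 2 x‖ ≠ 0 := by simpa using hx
  have hy' : ‖toLp 2 y‖ ≠ 0 := by simpa using hy
  have cos_angle : inner ℝ (toLp 2 (hopfMap x)) (toLp 2 (hopfMap y)) /
      (‖toLp 2 (hopfMap x)‖ * ‖toLp 2 (hopfMap y)‖) =
        2 * (‖hermC2 x y‖ / (‖toLp 2 x‖ * ‖toLp 2 y‖)) ^ 2 - 1 := by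
    rw [← innerR3_eq_inner, norm_toLp_hopfMap, norm_toLp_hopfMap]
    field_simp
    linear_combination four_mul_innerR3_hopfMap x y
  rw [InnerProductGeometry.angle, cos_angle]
  exact arccos_two_mul_sq_sub_one (by positivity)
    (div_le_one_of_le₀ (norm_hermC2_le x y) (by positivity))

/-- the Hopf map takes values in the sphere of radius `1/2`, the
relation `4⟨π(q₀),π(q₁)⟩ = 2|⟨q₀,q₁⟩|² − 1` holds, and hence the spherical
distance on `S²(1/2)` between `π(q₀)` and `π(q₁)` equals `arccos |⟨q₀,q₁⟩|`. -/
theorem stmt_13 (q₀ q₁ : ℂ × ℂ)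
    (hq₀ : ‖q₀.1‖ ^ 2 + ‖q₀.2‖ ^ 2 = 1)
    (hq₁ : ‖q₁.1‖ ^ 2 + ‖q₁.2‖ ^ 2 = 1) :
    (∀ q : ℂ × ℂ, ‖q.1‖ ^ 2 + ‖q.2‖ ^ 2 = 1 →
      Real.sqrt (‖(hopfMap q).1‖ ^ 2 + (hopfMap q).2 ^ 2) = 1 / 2) ∧
    4 * innerR3 (hopfMap q₀) (hopfMap q₁) = 2 * ‖hermC2 q₀ q₁‖ ^ 2 - 1 ∧
    (1 / 2) * Real.arccos (4 * innerR3 (hopfMap q₀) (hopfMap q₁)) =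
      Real.arccos (‖hermC2 q₀ q₁‖) := by
  have norm_eq_one {q : ℂ × ℂ} (hq : ‖q.1‖ ^ 2 + ‖q.2‖ ^ 2 = 1) : ‖toLp 2 q‖ = 1 := by
    rw [prod_norm_eq_of_L2, toLp_fst, toLp_snd, hq, Real.sqrt_one]
  have norm_hopfMap {q : ℂ × ℂ} (hq : ‖q.1‖ ^ 2 + ‖q.2‖ ^ 2 = 1) :
      ‖toLp 2 (hopfMap q)‖ = 1 / 2 := by
    rw [norm_toLp_hopfMap, norm_eq_one hq, one_pow]
  have ne_zero {q : ℂ × ℂ} (hq : ‖q.1‖ ^ 2 + ‖q.2‖ ^ 2 = 1) : q ≠ 0 := by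
    rintro rfl
    simp at hq
  refine ⟨fun q hq ↦ ?_, ?_, ?_⟩
  · rw [← norm_hopfMap hq, prod_norm_eq_of_L2, toLp_fst, toLp_snd, Real.norm_eq_abs, sq_abs]
  · rw [four_mul_innerR3_hopfMap, norm_eq_one hq₀, norm_eq_one hq₁, one_pow, one_mul]
  · rw [← angle_eq_arccos_four_mul_innerR3 (norm_hopfMap hq₀) (norm_hopfMap hq₁),
      angle_hopfMap (ne_zero hq₀) (ne_zero hq₁), norm_eq_one hq₀, norm_eq_one hq₁, mul_one, div_one]
    ring
end
end

section
/- Let s ≥ 0 and ψ ∈ (0,π), set τ := Arg(C_s(ψ)) ∈ (0,π), and let γ : ℝ → ℂ² be the unit-speed magnetic geodesic of strength s and contact angle ψ given by γ(t) = e^{i s t/2}·(e^{−i|C_s(ψ)|t}·w₀ + e^{i|C_s(ψ)|t}·w₁) with w₀ := (sin(τ/2), 0) and w₁ := (0, cos(τ/2)). Then the Hopf projection satisfies π(γ(t)) = ( (1/2)·sin τ · e^{2 i |C_s(ψ)| t}, −(1/2)·cos τ ) for all t ∈ ℝ; in particular π∘γ traverses, at constant angular speed 2|C_s(ψ)|,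 a geodesic circle on S²(1/2) of spherical radius τ/2 = (1/2)·Arg(C_s(ψ)). Moreover, for ψ ∈ (0,π) one has the identity 2·cos(Arg(C_s(ψ)))/sin(Arg(C_s(ψ))) = (2·cos ψ − s)/sin ψ. -/
noncomputable section

open scoped Real

/-- The magnetic geodesic on `S³ ⊂ ℂ²` with `w₀ = (sin(τ/2),0)`, `w₁ = (0,cos(τ/2))`,
`τ = Arg(C_s(ψ))`. -/
def magCurve3 (s ψ : ℝ) (t : ℝ) : ℂ × ℂ :=
  Complex.exp (Complex.I * s * t / 2) •
    (Complex.exp (-(Complex.I * normC s ψ * t)) •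
        (((Real.sin (argC s ψ / 2) : ℝ) : ℂ), (0 : ℂ)) +
     Complex.exp (Complex.I * normC s ψ * t) •
        ((0 : ℂ), ((Real.cos (argC s ψ / 2) : ℝ) : ℂ)))

/-! The first Hopf coordinate `conj z₁ * z₂` is invariant under a common phase of `z₁` and `z₂`
and is multiplied by `u ^ 2` under opposite phases `(conj u, u)`. Along the magnetic geodesic the
common phase is `exp (i s t / 2)` and the opposite one is `u = exp (i |C_s(ψ)| t)`, so the curve
projects to the orbit of the image of `(sin (τ/2), cos (τ/2))` under rotation by `u ^ 2`; the
double-angle formulas give that image. The last identity says that the cotangent of the argument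
of the complex number `C_s(ψ)` is the quotient of its real and imaginary parts. -/

lemma hopfMap_smul (c : ℂ) (z : ℂ × ℂ) : hopfMap (c • z) = ‖c‖ ^ 2 • hopfMap z := by
  ext1
  · simp only [hopfMap, Prod.smul_fst, Prod.smul_snd, smul_eq_mul, map_mul, Complex.real_smul,
      Complex.ofReal_pow, ← Complex.conj_mul']
    ring
  · simp only [hopfMap, Prod.smul_fst, Prod.smul_snd, smul_eq_mul, norm_mul]
    ring

lemma hopfMap_conj_mul_mul (u : ℂ) (z : ℂ × ℂ) :
    hopfMap (starRingEnd ℂ u * z.1, u * z.2) =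
      (u ^ 2 * (hopfMap z).1, ‖u‖ ^ 2 * (hopfMap z).2) := by
  ext1
  · simp only [hopfMap, map_mul, Complex.conj_conj]
    ring
  · simp only [hopfMap, norm_mul, RCLike.norm_conj]
    ring

lemma hopfMap_sin_cos (θ : ℝ) :
    hopfMap ((Real.sin θ : ℂ), (Real.cos θ : ℂ)) =
      ((1 / 2 : ℂ) * (Real.sin (2 * θ) : ℂ), -(1 / 2) * Real.cos (2 * θ)) := by
  ext1
  · simp only [hopfMap, Complex.conj_ofReal, Real.sin_two_mul]
    push_cast
    ring
  · simp only [hopfMap, Complex.norm_real, Real.norm_eq_abs, sq_abs, Real.cos_two_mul']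
    ring

lemma magCurve3_eq_smul (s ψ t : ℝ) :
    magCurve3 s ψ t = Complex.exp (Complex.I * (s * t / 2 : ℝ)) •
      (starRingEnd ℂ (Complex.exp (Complex.I * (normC s ψ * t : ℝ))) * Real.sin (argC s ψ / 2),
        Complex.exp (Complex.I * (normC s ψ * t : ℝ)) * Real.cos (argC s ψ / 2)) := by
  simp only [magCurve3, ← Complex.exp_conj, map_mul, Complex.conj_I, Complex.conj_ofReal,
    Prod.smul_mk, Prod.mk_add_mk, smul_eq_mul, mul_zero, add_zero, zero_add, Complex.ofReal_mul,
    Complex.ofReal_div, Complex.ofReal_ofNat, neg_mul, mul_assoc, mul_div_assoc]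

lemma hopfMap_magCurve3 (s ψ t : ℝ) :
    hopfMap (magCurve3 s ψ t) =
      ((1 / 2 : ℂ) * (Real.sin (argC s ψ) : ℂ) * Complex.exp (2 * Complex.I * normC s ψ * t),
        -(1 / 2) * Real.cos (argC s ψ)) := by
  have exp_sq : Complex.exp (Complex.I * (normC s ψ * t : ℝ)) ^ 2 =
      Complex.exp (2 * Complex.I * normC s ψ * t) := by
    rw [← Complex.exp_nat_mul]
    push_cast
    ring_nf
  rw [magCurve3_eq_smul, hopfMap_smul,
    hopfMap_conj_mul_mul _ ((Real.sin (argC s ψ / 2) : ℂ), (Real.cos (argC s ψ / 2) : ℂ)),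
    hopfMap_sin_cos, mul_div_cancel₀ _ two_ne_zero, exp_sq]
  simp only [Complex.norm_exp_I_mul_ofReal, one_pow, one_smul, one_mul]
  rw [mul_comm (Complex.exp _)]

/-- The point `C_s(ψ)`, regarded as a complex number so that `normC` and `argC` become the norm
and (for `sin ψ > 0`) the argument. -/
def pointC (s ψ : ℝ) : ℂ := ⟨-s / 2 + Real.cos ψ, Real.sin ψ⟩

lemma normC_eq_norm_pointC (s ψ : ℝ) : normC s ψ = ‖pointC s ψ‖ := by
  rw [Complex.norm_eq_sqrt_sq_add_sq, normC]
  congr 1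
  simp only [pointC]
  linear_combination -Real.sin_sq_add_cos_sq ψ

lemma argC_eq_arg_pointC {s ψ : ℝ} (hsin : 0 < Real.sin ψ) : argC s ψ = (pointC s ψ).arg := by
  rw [Complex.arg_of_im_pos hsin, ← normC_eq_norm_pointC]
  rfl

lemma arg_mem_Ioo_zero_pi {z : ℂ} (hz : 0 < z.im) : z.arg ∈ Set.Ioo 0 π := by
  refine ⟨(Complex.arg_nonneg_iff.2 hz.le).lt_of_ne fun h => ?_,
    Complex.arg_lt_pi_iff.2 (.inr hz.ne')⟩
  exact hz.ne' (Complex.arg_eq_zero_iff.1 h.symm).2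

lemma cot_arg (z : ℂ) : Real.cot z.arg = z.re / z.im := by
  rw [← Real.tan_inv_eq_cot, Complex.tan_arg, inv_div]

lemma two_mul_cot_argC {s ψ : ℝ} (hsin : 0 < Real.sin ψ) :
    2 * Real.cot (argC s ψ) = (2 * Real.cos ψ - s) / Real.sin ψ := by
  rw [argC_eq_arg_pointC hsin, cot_arg]
  simp only [pointC]
  ring

theorem stmt_14_general (s ψ : ℝ) (hsin : 0 < Real.sin ψ) :
    argC s ψ ∈ Set.Ioo 0 π ∧
    (∀ t : ℝ, hopfMap (magCurve3 s ψ t) =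
      ((1 / 2 : ℂ) * ((Real.sin (argC s ψ) : ℝ) : ℂ) *
          Complex.exp (2 * Complex.I * normC s ψ * t),
        -(1 / 2) * Real.cos (argC s ψ))) ∧
    2 * Real.cos (argC s ψ) / Real.sin (argC s ψ) =
      (2 * Real.cos ψ - s) / Real.sin ψ := by
  refine ⟨?_, hopfMap_magCurve3 s ψ, ?_⟩
  · rw [argC_eq_arg_pointC hsin]
    exact arg_mem_Ioo_zero_pi hsin
  · rw [mul_div_assoc, ← Real.cot_eq_cos_div_sin]
    exact two_mul_cot_argC hsin

/-- the Hopf projection of the magnetic geodesic of strength `s`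
and contact angle `ψ ∈ (0,π)` traverses, at constant angular speed `2|C_s(ψ)|`,
the geodesic circle of spherical radius `Arg(C_s(ψ))/2` centered at `(0,−1/2)`;
moreover `2·cos(Arg C_s(ψ))/sin(Arg C_s(ψ)) = (2cos ψ − s)/sin ψ`. -/
theorem stmt_14 (s ψ : ℝ) (hs : 0 ≤ s) (hψ : ψ ∈ Set.Ioo 0 π) :
    argC s ψ ∈ Set.Ioo 0 π ∧
    (∀ t : ℝ, hopfMap (magCurve3 s ψ t) =
      ((1 / 2 : ℂ) * ((Real.sin (argC s ψ) : ℝ) : ℂ) *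
          Complex.exp (2 * Complex.I * normC s ψ * t),
        -(1 / 2) * Real.cos (argC s ψ))) ∧
    2 * Real.cos (argC s ψ) / Real.sin (argC s ψ) =
      (2 * Real.cos ψ - s) / Real.sin ψ :=
  stmt_14_general s ψ (Real.sin_pos_of_mem_Ioo hψ)
end
end

section
/- Let n ≥ 0, s ≥ 0 and ψ ∈ [0,π], and let γ : ℝ → ℂ^{n+1} be a unit-speed magnetic geodesic of strength s with contact angle ψ, i.e. γ''(t) − i·s·γ'(t) + (1 − s·cos ψ)·γ(t) = 0 for all t, with |γ(0)| = 1, |γ'(0)| = 1, Re⟨γ(0),γ'(0)⟩ = 0, Re⟨i·γ(0),γ'(0)⟩ = cos ψ. Then there exists a complex-linear subspace V ⊆ ℂ^{n+1} with complex dimension at most 2 (namely the complex span of γ(0) and γ'(0)) such that γ(t) ∈ V and |γ(t)| = 1 for every t ∈ ℝ. In particular, every magnetic geodesic of (S^{2n+1}, g, s·dα) is contained in the intersection of S^{2n+1} with a complex plane, which is a 3-sphere (or a circle). -/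
noncomputable section

open scoped Real

/-!
The quotient of `E` by the span of `γ 0` and `γ' 0` carries `γ` to a solution of the same linear
equation with zero initial data, which vanishes by uniqueness; so `γ` stays in the span. For a
magnetic geodesic `b = Re ⟪γ, γ'⟫` is half the derivative of `‖γ‖²`, and differentiating twice gives
the scalar equation `b'' = (4 κ - s²) b`, with `κ = s cos ψ - 1`. The initial conditions make `b`
and `b'` vanish at `0`, so uniqueness again yields `b = 0`, that is, `‖γ‖` is constant.
-/

section SecondOrder

variable {𝕜 E F : Type*} [NontriviallyNormedField 𝕜]
  [NormedAddCommGroup E] [NormedSpace ℝ E] [NormedSpace 𝕜 E]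
  [NormedAddCommGroup F] [NormedSpace ℝ F] [NormedSpace 𝕜 F]

/-- The curve `f`, with velocity `f'`, solves the linear equation `f'' = a f' + b f` on `ℝ`. The
velocity is an argument so that a solution is the same thing as one of the first-order system. -/
structure IsSecondOrderSolution (a b : 𝕜) (f f' : ℝ → E) : Prop where
  hasDerivAt (t : ℝ) : HasDerivAt f (f' t) t
  hasDerivAt_velocity (t : ℝ) : HasDerivAt f' (a • f' t + b • f t) t

namespace IsSecondOrderSolution

variable {a b : 𝕜} {f f' : ℝ → E}

theorem clm_comp [LinearMap.CompatibleSMul E F ℝ 𝕜] (h : IsSecondOrderSolution a b f f')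
    (L : E →L[𝕜] F) : IsSecondOrderSolution a b (fun t ↦ L (f t)) (fun t ↦ L (f' t)) where
  hasDerivAt t := (L.restrictScalars ℝ).hasFDerivAt.comp_hasDerivAt t (h.hasDerivAt t)
  hasDerivAt_velocity t := by
    refine ((L.restrictScalars ℝ).hasFDerivAt.comp_hasDerivAt t
      (h.hasDerivAt_velocity t)).congr_deriv ?_
    simp only [ContinuousLinearMap.coe_restrictScalars', map_add, map_smul]

theorem eq_zero (h : IsSecondOrderSolution a b f f') (h₀ : f 0 = 0) (h₀' : f' 0 = 0) : f = 0 := by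
  let A : E × E →L[𝕜] E × E :=
    (ContinuousLinearMap.snd 𝕜 E E).prod
      (a • ContinuousLinearMap.snd 𝕜 E E + b • ContinuousLinearMap.fst 𝕜 E E)
  have h_system (t : ℝ) : HasDerivAt (fun t ↦ (f t, f' t)) (A (f t, f' t)) t :=
    (h.hasDerivAt t).prodMk (h.hasDerivAt_velocity t)
  have h_zero (t : ℝ) : HasDerivAt (fun _ ↦ (0 : E × E)) (A 0) t := by
    simpa only [map_zero] using hasDerivAt_const t (0 : E × E)
  have h_eq : (fun t ↦ (f t, f' t)) = fun _ ↦ 0 :=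
    ODE_solution_unique_univ (v := fun _ ↦ A) (s := fun _ ↦ Set.univ) (t₀ := 0)
      (fun _ ↦ A.lipschitz.lipschitzOnWith) (fun t ↦ ⟨h_system t, Set.mem_univ _⟩)
      (fun t ↦ ⟨h_zero t, Set.mem_univ _⟩) (Prod.ext h₀ h₀')
  exact funext fun t ↦ congrArg Prod.fst (congrFun h_eq t)

theorem mem_of_isClosed [SMul ℝ 𝕜] [IsScalarTower ℝ 𝕜 E] (h : IsSecondOrderSolution a b f f')
    {V : Submodule 𝕜 E} (hV : IsClosed (V : Set E)) (h₀ : f 0 ∈ V) (h₀' : f' 0 ∈ V) (t : ℝ) :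
    f t ∈ V := by
  have h_quotient : (fun t ↦ V.mkQL (f t)) = 0 :=
    (h.clm_comp V.mkQL).eq_zero ((Submodule.Quotient.mk_eq_zero V).2 h₀)
      ((Submodule.Quotient.mk_eq_zero V).2 h₀')
  exact (Submodule.Quotient.mk_eq_zero V).1 (congrFun h_quotient t)

theorem mem_span [CompleteSpace 𝕜] [SMul ℝ 𝕜] [IsScalarTower ℝ 𝕜 E]
    (h : IsSecondOrderSolution a b f f') (t : ℝ) : f t ∈ Submodule.span 𝕜 {f 0, f' 0} := by
  have : FiniteDimensional 𝕜 (Submodule.span 𝕜 {f 0, f' 0}) := .span_of_finite 𝕜 (by simp)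
  exact h.mem_of_isClosed (Submodule.closed_of_finiteDimensional _)
    (Submodule.subset_span (by simp)) (Submodule.subset_span (by simp)) t

end IsSecondOrderSolution

end SecondOrder

theorem finrank_span_pair_le_two {R M : Type*} [Ring R] [StrongRankCondition R] [AddCommGroup M]
    [Module R M] (x y : M) : Module.finrank R (Submodule.span R {x, y}) ≤ 2 := by
  classical
  have h_card : Set.finrank R (({x, y} : Finset M) : Set M) ≤ 2 :=
    (finrank_span_finset_le_card _).trans Finset.card_le_two
  rwa [Finset.coe_pair] at h_card

section InnerProductSpace

open scoped InnerProductSpace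

variable {E : Type*} [NormedAddCommGroup E] [InnerProductSpace ℂ E] {γ γ' : ℝ → E} {s κ : ℝ}

theorem hasDerivAt_norm_sq {f : ℝ → E} {f' : E} {t : ℝ} (hf : HasDerivAt f f' t) :
    HasDerivAt (fun t ↦ ‖f t‖ ^ 2) (2 * (⟪f t, f'⟫_ℂ).re) t :=
  letI := InnerProductSpace.complexToReal (G := E)
  hf.norm_sq

namespace IsSecondOrderSolution

theorem hasDerivAt_inner_velocity (h : IsSecondOrderSolution (s * Complex.I) (κ : ℂ) γ γ') (t : ℝ) :
    HasDerivAt (fun t ↦ ⟪γ t, γ' t⟫_ℂ)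
      (s * Complex.I * ⟪γ t, γ' t⟫_ℂ + (‖γ' t‖ ^ 2 + κ * ‖γ t‖ ^ 2 : ℝ)) t := by
  refine ((h.hasDerivAt t).inner ℂ (h.hasDerivAt_velocity t)).congr_deriv ?_
  simp only [inner_add_right, inner_smul_right, inner_self_eq_norm_sq_to_K, Complex.coe_algebraMap]
  push_cast
  ring

theorem hasDerivAt_energy (h : IsSecondOrderSolution (s * Complex.I) (κ : ℂ) γ γ') (t : ℝ) :
    HasDerivAt (fun t ↦ ‖γ' t‖ ^ 2 + κ * ‖γ t‖ ^ 2) (4 * κ * (⟪γ t, γ' t⟫_ℂ).re) t := by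
  have h_acceleration : (⟪γ' t, (s * Complex.I) • γ' t + (κ : ℂ) • γ t⟫_ℂ).re =
      κ * (⟪γ t, γ' t⟫_ℂ).re := by
    rw [inner_add_right, inner_smul_right, inner_smul_right, inner_self_eq_norm_sq_to_K,
      ← inner_conj_symm]
    simp [← Complex.ofReal_pow, -inner_conj_symm]
  refine ((hasDerivAt_norm_sq (h.hasDerivAt_velocity t)).add
    ((hasDerivAt_norm_sq (h.hasDerivAt t)).const_mul κ)).congr_deriv ?_
  rw [h_acceleration]
  ring

theorem re_inner_velocity (h : IsSecondOrderSolution (s * Complex.I) (κ : ℂ) γ γ') :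
    IsSecondOrderSolution (0 : ℝ) (4 * κ - s ^ 2) (fun t ↦ (⟪γ t, γ' t⟫_ℂ).re)
      (fun t ↦ ‖γ' t‖ ^ 2 + κ * ‖γ t‖ ^ 2 - s * (⟪γ t, γ' t⟫_ℂ).im) where
  hasDerivAt t := by
    refine (Complex.reCLM.hasFDerivAt.comp_hasDerivAt t
      (h.hasDerivAt_inner_velocity t)).congr_deriv ?_
    simp only [Complex.reCLM_apply, Complex.add_re, Complex.mul_re, Complex.mul_im,
      Complex.ofReal_re, Complex.ofReal_im, Complex.I_re, Complex.I_im]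
    ring
  hasDerivAt_velocity t := by
    have h_im : HasDerivAt (fun t ↦ (⟪γ t, γ' t⟫_ℂ).im) (s * (⟪γ t, γ' t⟫_ℂ).re) t := by
      refine (Complex.imCLM.hasFDerivAt.comp_hasDerivAt t
        (h.hasDerivAt_inner_velocity t)).congr_deriv ?_
      simp only [Complex.imCLM_apply, Complex.add_im, Complex.mul_re, Complex.mul_im,
        Complex.ofReal_re, Complex.ofReal_im, Complex.I_re, Complex.I_im]
      ring
    refine ((h.hasDerivAt_energy t).sub (h_im.const_mul s)).congr_deriv ?_
    simp only [smul_eq_mul]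
    ring

theorem norm_eq_norm_zero (h : IsSecondOrderSolution (s * Complex.I) (κ : ℂ) γ γ')
    (h_re : (⟪γ 0, γ' 0⟫_ℂ).re = 0)
    (h_energy : ‖γ' 0‖ ^ 2 + κ * ‖γ 0‖ ^ 2 = s * (⟪γ 0, γ' 0⟫_ℂ).im) (t : ℝ) : ‖γ t‖ = ‖γ 0‖ := by
  have h_orthogonal : (fun t ↦ (⟪γ t, γ' t⟫_ℂ).re) = 0 :=
    h.re_inner_velocity.eq_zero h_re (sub_eq_zero.2 h_energy)
  have h_deriv (t : ℝ) : HasDerivAt (fun t ↦ ‖γ t‖ ^ 2) 0 t := by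
    simpa [congrFun h_orthogonal t] using hasDerivAt_norm_sq (h.hasDerivAt t)
  have h_sq : ‖γ t‖ ^ 2 = ‖γ 0‖ ^ 2 :=
    is_const_of_deriv_eq_zero (fun t ↦ (h_deriv t).differentiableAt) (fun t ↦ (h_deriv t).deriv) t 0
  exact (sq_eq_sq₀ (norm_nonneg _) (norm_nonneg _)).1 h_sq

end IsSecondOrderSolution

/-- Unit-speed magnetic geodesics of strength `s` on the unit sphere of a complex inner product
space, described in the ambient space. The parameter `c` is the cosine of the contact angle. Since
`⟪·, ·⟫_ℂ` is conjugate-linear in the first argument, `Im ⟪γ, γ'⟫_ℂ` plays the role of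
`Re ⟨i γ, γ'⟩` in the convention of the paper. -/
structure IsMagneticGeodesic (s c : ℝ) (γ : ℝ → E) : Prop
    extends IsSecondOrderSolution (s * Complex.I) ((s * c - 1 : ℝ) : ℂ) γ (deriv γ) where
  norm_apply_zero : ‖γ 0‖ = 1
  norm_deriv_apply_zero : ‖deriv γ 0‖ = 1
  re_inner_apply_zero : (⟪γ 0, deriv γ 0⟫_ℂ).re = 0
  im_inner_apply_zero : (⟪γ 0, deriv γ 0⟫_ℂ).im = c

theorem IsMagneticGeodesic.norm_eq_one {c : ℝ} (h : IsMagneticGeodesic s c γ) (t : ℝ) :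
    ‖γ t‖ = 1 := by
  rw [h.toIsSecondOrderSolution.norm_eq_norm_zero h.re_inner_apply_zero ?_ t, h.norm_apply_zero]
  rw [h.norm_apply_zero, h.norm_deriv_apply_zero, h.im_inner_apply_zero]
  ring

end InnerProductSpace

theorem IsMagGeo.isMagneticGeodesic {n : ℕ} {s ψ : ℝ} {γ : ℝ → EuclideanSpace ℂ (Fin (n + 1))}
    (h : IsMagGeo s ψ γ) : IsMagneticGeodesic s (Real.cos ψ) γ := by
  obtain ⟨h_smooth, h_ode, h_norm, h_speed, h_re, h_im⟩ := h
  refine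
    { hasDerivAt t := (h_smooth.differentiable (by simp) t).hasDerivAt
      hasDerivAt_velocity t := ?_
      norm_apply_zero := h_norm
      norm_deriv_apply_zero := h_speed
      re_inner_apply_zero := by rw [← inner_conj_symm, Complex.conj_re]; exact h_re
      im_inner_apply_zero := by
        rw [← inner_conj_symm, Complex.conj_im]
        simpa [herm, inner_smul_right] using h_im }
  have h_deriv : Differentiable ℝ (deriv γ) :=
    (contDiff_infty_iff_deriv.1 h_smooth).2.differentiable (by simp)
  refine (h_deriv t).hasDerivAt.congr_deriv ?_
  rw [← sub_eq_zero, ← h_ode t]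
  push_cast
  module

theorem stmt_17_general {E : Type*} [NormedAddCommGroup E] [InnerProductSpace ℂ E] {s c : ℝ}
    {γ : ℝ → E} (hγ : IsMagneticGeodesic s c γ) :
    ∃ V : Submodule ℂ E,
      V = Submodule.span ℂ {γ 0, deriv γ 0} ∧
      Module.finrank ℂ V ≤ 2 ∧
      ∀ t : ℝ, γ t ∈ V ∧ ‖γ t‖ = 1 :=
  ⟨_, rfl, finrank_span_pair_le_two _ _, fun t ↦ ⟨hγ.mem_span t, hγ.norm_eq_one t⟩⟩

/-- every unit-speed magnetic geodesic stays on the unit sphere and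
in the complex span of its initial position and velocity, a complex subspace of
dimension at most 2; hence it is contained in the intersection of `S^{2n+1}` with
a complex plane. -/
theorem stmt_17 {n : ℕ} (s ψ : ℝ) (hs : 0 ≤ s) (hψ : ψ ∈ Set.Icc 0 π)
    (γ : ℝ → EuclideanSpace ℂ (Fin (n + 1))) (hγ : IsMagGeo s ψ γ) :
    ∃ V : Submodule ℂ (EuclideanSpace ℂ (Fin (n + 1))),
      V = Submodule.span ℂ {γ 0, deriv γ 0} ∧
      Module.finrank ℂ V ≤ 2 ∧
      ∀ t : ℝ, γ t ∈ V ∧ ‖γ t‖ = 1 :=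
  stmt_17_general hγ.isMagneticGeodesic
end
end
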